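/- For every singular cardinal μ it holds that 𝔞_μ ≤ 𝔞_{cf μ}. -/

import Mathlib

/-!
Let `κ = cf μ < μ` and partition a set of size `μ` into `κ` blocks of sizes below `μ` such that, for
every `ν < μ`, fewer than `κ` blocks have size at most `ν`. Then a union of blocks has size `μ`
exactly if `κ` many blocks occur in it, so replacing every index by its block turns a `κ`-almost
disjoint family into a `μ`-almost disjoint one of the same cardinality. Maximality is preserved:
a set `C` of size `μ` meets, for every block, some block in at least as many points, and the set `X`
of blocks so chosen has size `κ`; a member of the `κ`-mad family sharing `κ` many indices with `X`
then picks up `μ` many points of `C`. Hence `MADSet κ ⊆ MADSet μ`. As `sInf ∅ = 0` for cardinals,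
one also needs that `MADSet κ` is nonempty, which is Zorn's lemma applied to a partition of `κ`
into `κ` many sets of size `κ`.
-/

universe u
open Cardinal

/-- A family `𝒜` of subsets of `α` is `μ`-almost disjoint: its union has size `μ`,
each member has size `μ`, and distinct members intersect in a set of size `< μ`. -/
def IsADFamily (μ : Cardinal.{u}) {α : Type u} (𝒜 : Set (Set α)) : Prop :=
  #(⋃₀ 𝒜) = μ ∧ (∀ A ∈ 𝒜, #A = μ) ∧
    ∀ A ∈ 𝒜, ∀ B ∈ 𝒜, A ≠ B → #(↥(A ∩ B)) < μ

/-- `𝒜` is maximal `μ`-almost disjoint: it is `μ`-ad and no new set `C ⊆ ⋃₀ 𝒜`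
can be added keeping the family `μ`-almost disjoint. -/
def IsMadFamily (μ : Cardinal.{u}) {α : Type u} (𝒜 : Set (Set α)) : Prop :=
  IsADFamily μ 𝒜 ∧ ¬∃ C, C ⊆ ⋃₀ 𝒜 ∧ C ∉ 𝒜 ∧ IsADFamily μ (insert C 𝒜)

/-- `MADSet μ` is the set of cardinalities of nontrivial `μ`-mad families,
i.e. `μ`-mad families with at least `cf μ` members. -/
def MADSet (μ : Cardinal.{u}) : Set Cardinal.{u} :=
  {c | ∃ 𝒜 : Set (Set μ.out), IsMadFamily μ 𝒜 ∧ μ.ord.cof ≤ #𝒜 ∧ #𝒜 = c}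

section

variable {α ι : Type u} {μ : Cardinal.{u}}

/-- A family `g` of cardinals converges to `μ` from below: every term is below `μ`, and for
any `ν < μ` fewer than `#ι` terms are at most `ν`. For `ι` of size `cf μ` this plays the role of an
increasing sequence cofinal in `μ`, without ordering the index set. -/
structure ConvergesBelow (g : ι → Cardinal.{u}) (μ : Cardinal.{u}) : Prop where
  lt (i : ι) : g i < μ
  mk_setOf_le_lt {ν : Cardinal.{u}} (hν : ν < μ) : #{i | g i ≤ ν} < #ι

namespace ConvergesBelow

variable {g : ι → Cardinal.{u}}

lemma le_of_forall_le (hg : ConvergesBelow g μ) {Y : Set ι} (hY : #ι ≤ #Y) {ν : Cardinal.{u}}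
    (h : ∀ i ∈ Y, g i ≤ ν) : μ ≤ ν := by
  by_contra! hν
  exact (hY.trans (mk_le_mk_of_subset h)).not_gt (hg.mk_setOf_le_lt hν)

lemma comp_equiv (hg : ConvergesBelow g μ) {ι' : Type u} (e : ι' ≃ ι) :
    ConvergesBelow (g ∘ e) μ where
  lt i := hg.lt (e i)
  mk_setOf_le_lt {ν} hν := by
    rw [mk_congr e]
    exact (mk_preimage_equiv e {i | g i ≤ ν}).trans_lt (hg.mk_setOf_le_lt hν)

lemma sum_eq (hg : ConvergesBelow g μ) (hμ : ℵ₀ ≤ μ) (hι : #ι ≤ μ) : sum g = μ := by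
  refine le_antisymm ?_ (hg.le_of_forall_le mk_univ.ge fun i _ => le_sum g i)
  calc sum g ≤ #ι * ⨆ i, g i := sum_le_mk_mul_iSup g
    _ ≤ μ * μ := mul_le_mul' hι (ciSup_le' fun i => (hg.lt i).le)
    _ = μ := mul_eq_self hμ

end ConvergesBelow

lemma exists_mk_Iio_toType_eq {ν : Cardinal.{u}} (hν : ν < μ) :
    ∃ x : μ.ord.ToType, #(Set.Iio x) = ν := by
  have hmem : ν.ord < Ordinal.type (α := μ.ord.ToType) (· < ·) := by simpa using hν
  let x : μ.ord.ToType := Ordinal.enum (α := μ.ord.ToType) (· < ·) ⟨ν.ord, hmem⟩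
  refine ⟨x, ?_⟩
  calc #(Set.Iio x) = (Ordinal.typein (α := μ.ord.ToType) (· < ·) x).card := rfl
    _ = ν := by rw [Ordinal.typein_enum, card_ord]

lemma exists_convergesBelow (hμ : Order.IsSuccLimit μ) (hι : #ι = μ.ord.cof) :
    ∃ g : ι → Cardinal.{u}, ConvergesBelow g μ := by
  obtain ⟨S, hS, hSord⟩ := Ordinal.exists_ord_cof_eq μ.ord.ToType
  rw [Ordinal.cof_toType] at hSord
  have hScard : #S = μ.ord.cof := by simpa using congrArg Ordinal.card hSord
  obtain ⟨e⟩ : Nonempty (ι ≃ S) := Cardinal.eq.1 (hι.trans hScard.symm)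
  suffices h : ConvergesBelow (fun s : S => #(Set.Iio s.1)) μ from ⟨_, h.comp_equiv e⟩
  refine ⟨fun s => by simpa using mk_Iio_lt s.1, fun {ν} hν => ?_⟩
  obtain ⟨x, hx⟩ := exists_mk_Iio_toType_eq (hμ.succ_lt hν)
  obtain ⟨t, ht, hxt⟩ := hS x
  have hsub : {s : S | #(Set.Iio s.1) ≤ ν} ⊆ Set.Iio ⟨t, ht⟩ := by
    intro s hs
    by_contra hts
    have hxs : x ≤ s.1 := hxt.trans (not_lt.1 hts)
    have hsucc : Order.succ ν ≤ ν :=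
      hx.symm.le.trans ((mk_le_mk_of_subset (Set.Iio_subset_Iio hxs)).trans hs)
    exact (Order.lt_succ ν).not_ge hsucc
  exact (mk_le_mk_of_subset hsub).trans_lt (mk_Iio_lt _ (by rw [hSord, hScard]))

lemma exists_forall_mk_fiber_eq {g : ι → Cardinal.{u}} (hg : sum g = #α) :
    ∃ p : α → ι, ∀ i, #(p ⁻¹' {i}) = g i := by
  obtain ⟨e⟩ : Nonempty (α ≃ Σ i, (g i).out) := by
    rw [← Cardinal.eq, mk_sigma]
    simp only [mk_out, hg]
  refine ⟨fun x => (e x).1, fun i => ?_⟩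
  calc
    #(e ⁻¹' (Sigma.fst ⁻¹' {i})) = #(Sigma.fst ⁻¹' {i} : Set (Σ i, (g i).out)) :=
      mk_preimage_equiv e _
    _ = #(Set.range (Sigma.mk (β := fun i => (g i).out) i)) := by rw [Set.range_sigmaMk]
    _ = #(g i).out := mk_range_eq _ sigma_mk_injective
    _ = g i := mk_out _

lemma exists_convergesBelow_mk_fiber (hα : (#α).IsSingular) (hι : #ι = (#α).ord.cof) :
    ∃ p : α → ι, ConvergesBelow (fun i => #(p ⁻¹' {i})) #α := by
  obtain ⟨g, hg⟩ := exists_convergesBelow hα.isSuccLimit hι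
  obtain ⟨p, hp⟩ :=
    exists_forall_mk_fiber_eq (hg.sum_eq hα.aleph0_le (hι.trans_le (Ordinal.cof_ord_le _)))
  exact ⟨p, by simpa only [hp] using hg⟩

section Fibers

variable {p : α → ι}

lemma mk_preimage_lt_of_lt_cof (hμ : ℵ₀ ≤ μ) {Y : Set ι} (hp : ∀ i ∈ Y, #(p ⁻¹' {i}) < μ)
    (hY : #Y < μ.ord.cof) : #(p ⁻¹' Y) < μ := by
  rw [← Set.biUnion_preimage_singleton]
  exact (mk_biUnion_le _ _).trans_lt <| mul_lt_of_lt hμ (hY.trans_le (Ordinal.cof_ord_le μ))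
    (iSup_lt_of_lt_cof_ord hY fun i => hp i i.2)

lemma le_mk_preimage (hp : ConvergesBelow (fun i => #(p ⁻¹' {i})) μ) {Y : Set ι}
    (hY : #ι ≤ #Y) : μ ≤ #(p ⁻¹' Y) :=
  hp.le_of_forall_le hY fun _ hi =>
    mk_le_mk_of_subset (Set.preimage_mono (Set.singleton_subset_iff.2 hi))

lemma exists_le_mk_inter_fiber {C : Set α} (hC : ℵ₀ ≤ #C) (hι : #ι < #C) {ν : Cardinal.{u}}
    (hν : ν < #C) : ∃ i ∈ p '' C, ν ≤ #(C ∩ p ⁻¹' {i} : Set α) := by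
  by_contra! hcon
  have hunion : C ⊆ ⋃ i ∈ p '' C, C ∩ p ⁻¹' {i} := fun x hx =>
    Set.mem_biUnion (Set.mem_image_of_mem p hx) ⟨hx, rfl⟩
  refine ((mk_le_mk_of_subset hunion).trans (mk_biUnion_le _ _)).not_gt ?_
  exact mul_lt_of_lt hC ((mk_set_le _).trans_lt hι)
    ((ciSup_le' fun i : p '' C => (hcon i i.2).le).trans_lt hν)

lemma exists_subset_image_forall_le_mk_inter_preimage
    (hp : ConvergesBelow (fun i => #(p ⁻¹' {i})) #α) (hα : (#α).IsSingular)
    (hι : #ι = (#α).ord.cof) {C : Set α} (hC : #C = #α) :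
    ∃ X ⊆ p '' C, #X = #ι ∧ ∀ A, #ι ≤ #(X ∩ A : Set ι) → #α ≤ #(C ∩ p ⁻¹' A : Set α) := by
  have hlarge (j : ι) : ∃ i ∈ p '' C, #(p ⁻¹' {j}) ≤ #(C ∩ p ⁻¹' {i} : Set α) :=
    exists_le_mk_inter_fiber (hC ▸ hα.aleph0_le) (by rw [hC, hι]; exact hα.cof_ord_lt)
      (hC ▸ hp.lt j)
  choose f hfC hf using hlarge
  have hcapture {Y A : Set ι} (hY : #ι ≤ #Y) (hYA : ∀ j ∈ Y, f j ∈ A) :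
      #α ≤ #(C ∩ p ⁻¹' A : Set α) :=
    hp.le_of_forall_le hY fun j hj => (hf j).trans <| mk_le_mk_of_subset <|
      Set.inter_subset_inter_right C (Set.preimage_mono (Set.singleton_subset_iff.2 (hYA j hj)))
  refine ⟨Set.range f, Set.range_subset_iff.2 hfC, (mk_set_le _).antisymm ?_, fun A hA => ?_⟩
  · by_contra! hsmall
    have hlt := mk_preimage_lt_of_lt_cof hα.aleph0_le (fun i _ => hp.lt i) (hι ▸ hsmall)
    have hle := hcapture mk_univ.ge fun j _ => Set.mem_range_self j
    exact (hle.trans (mk_le_mk_of_subset Set.inter_subset_right)).not_gt hlt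
  · refine hcapture (Y := f ⁻¹' A) (hA.trans ?_) fun _ hj => hj
    rw [Set.inter_comm, ← Set.image_preimage_eq_inter_range]
    exact mk_image_le

end Fibers

lemma isADFamily_insert_iff {𝒜 : Set (Set α)} (h𝒜 : IsADFamily μ 𝒜) {C : Set α}
    (hC : C ⊆ ⋃₀ 𝒜) :
    IsADFamily μ (insert C 𝒜) ↔ #C = μ ∧ ∀ A ∈ 𝒜, C ≠ A → #(C ∩ A : Set α) < μ := by
  refine ⟨fun h => ⟨h.2.1 C (Set.mem_insert C 𝒜), fun A hA =>
    h.2.2 C (Set.mem_insert C 𝒜) A (Set.mem_insert_of_mem C hA)⟩, fun ⟨hCμ, hCA⟩ => ⟨?_, ?_, ?_⟩⟩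
  · rw [Set.sUnion_insert, Set.union_eq_right.2 hC, h𝒜.1]
  · exact Set.forall_mem_insert.2 ⟨hCμ, h𝒜.2.1⟩
  · rintro A (rfl | hA) B (rfl | hB) hAB
    · exact absurd rfl hAB
    · exact hCA B hB hAB
    · rw [Set.inter_comm]
      exact hCA A hA hAB.symm
    · exact h𝒜.2.2 A hA B hB hAB

lemma isMadFamily_iff {𝒜 : Set (Set α)} :
    IsMadFamily μ 𝒜 ↔ IsADFamily μ 𝒜 ∧
      ∀ C ⊆ ⋃₀ 𝒜, #C = μ → ∃ A ∈ 𝒜, μ ≤ #(C ∩ A : Set α) := by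
  refine and_congr_right fun h𝒜 => ⟨fun hmax C hC hCμ => ?_, ?_⟩
  · by_contra! hsmall
    have hC𝒜 : C ∉ 𝒜 := fun hmem => by simpa [hCμ] using hsmall C hmem
    exact hmax ⟨C, hC, hC𝒜, (isADFamily_insert_iff h𝒜 hC).2 ⟨hCμ, fun A hA _ => hsmall A hA⟩⟩
  · rintro hbig ⟨C, hC, hC𝒜, hins⟩
    obtain ⟨hCμ, hCA⟩ := (isADFamily_insert_iff h𝒜 hC).1 hins
    obtain ⟨A, hA, hle⟩ := hbig C hC hCμ
    exact hle.not_gt (hCA A hA (ne_of_mem_of_not_mem hA hC𝒜).symm)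

lemma isADFamily_sUnion_of_isChain {c : Set (Set (Set α))} (hchain : IsChain (· ⊆ ·) c)
    (hne : c.Nonempty) {U : Set α} (hc : ∀ 𝒜 ∈ c, IsADFamily μ 𝒜 ∧ ⋃₀ 𝒜 = U) :
    IsADFamily μ (⋃₀ c) ∧ ⋃₀ (⋃₀ c) = U := by
  have hU : ⋃₀ (⋃₀ c) = U := by
    calc ⋃₀ (⋃₀ c) = ⋃ 𝒜 ∈ c, ⋃₀ 𝒜 := sSup_sUnion c
      _ = ⋃ 𝒜 ∈ c, U := Set.iUnion₂_congr fun 𝒜 h𝒜 => (hc 𝒜 h𝒜).2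
      _ = U := Set.biUnion_const hne U
  obtain ⟨𝒜, h𝒜⟩ := hne
  refine ⟨⟨by rw [hU, ← (hc 𝒜 h𝒜).2, (hc 𝒜 h𝒜).1.1], ?_, ?_⟩, hU⟩
  · rintro A ⟨ℬ, hℬ, hA⟩
    exact (hc ℬ hℬ).1.2.1 A hA
  · rintro A ⟨ℬ, hℬ, hA⟩ B ⟨𝒞, h𝒞, hB⟩ hAB
    obtain ⟨𝒟, h𝒟, hℬ𝒟, h𝒞𝒟⟩ := hchain.directedOn ℬ hℬ 𝒞 h𝒞
    exact (hc 𝒟 h𝒟).1.2.2 A (hℬ𝒟 hA) B (h𝒞𝒟 hB) hAB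

lemma IsADFamily.exists_isMadFamily_superset {𝒜 : Set (Set α)} (h𝒜 : IsADFamily μ 𝒜) :
    ∃ ℳ, 𝒜 ⊆ ℳ ∧ IsMadFamily μ ℳ := by
  obtain ⟨ℳ, h𝒜ℳ, hℳ⟩ := zorn_subset_nonempty {ℬ | IsADFamily μ ℬ ∧ ⋃₀ ℬ = ⋃₀ 𝒜}
    (fun c hc hchain hne => ⟨⋃₀ c, isADFamily_sUnion_of_isChain hchain hne hc,
      fun _ => Set.subset_sUnion_of_mem⟩) 𝒜 ⟨h𝒜, rfl⟩
  refine ⟨ℳ, h𝒜ℳ, hℳ.prop.1, ?_⟩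
  rintro ⟨C, hC, hCℳ, hins⟩
  have hunion : ⋃₀ insert C ℳ = ⋃₀ 𝒜 := by
    rw [Set.sUnion_insert, Set.union_eq_right.2 hC, hℳ.prop.2]
  exact hCℳ (hℳ.le_of_ge ⟨hins, hunion⟩ (Set.subset_insert C ℳ) (Set.mem_insert C ℳ))

section Preimage

variable {p : α → ι} {𝒜 : Set (Set ι)}

lemma IsADFamily.mk_preimage_inter_lt (h𝒜 : IsADFamily #ι 𝒜)
    (hp : ∀ i, #(p ⁻¹' {i}) < #α) (hα : ℵ₀ ≤ #α) (hι : #ι = (#α).ord.cof)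
    {A B : Set ι} (hA : A ∈ 𝒜) (hB : B ∈ 𝒜) (hAB : A ≠ B) :
    #(p ⁻¹' A ∩ p ⁻¹' B : Set α) < #α :=
  mk_preimage_lt_of_lt_cof (Y := A ∩ B) hα (fun i _ => hp i) (hι ▸ h𝒜.2.2 A hA B hB hAB)

lemma IsADFamily.mk_preimage_eq (h𝒜 : IsADFamily #ι 𝒜)
    (hp : ConvergesBelow (fun i => #(p ⁻¹' {i})) #α) {A : Set ι} (hA : A ∈ 𝒜) :
    #(p ⁻¹' A) = #α :=
  (mk_set_le _).antisymm (le_mk_preimage hp (h𝒜.2.1 A hA).ge)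

lemma IsADFamily.injOn_preimage (h𝒜 : IsADFamily #ι 𝒜)
    (hp : ConvergesBelow (fun i => #(p ⁻¹' {i})) #α) (hα : ℵ₀ ≤ #α)
    (hι : #ι = (#α).ord.cof) : Set.InjOn (Set.preimage p) 𝒜 := by
  intro A hA B hB heq
  by_contra hAB
  have hlt := h𝒜.mk_preimage_inter_lt hp.lt hα hι hA hB hAB
  rw [← heq, Set.inter_self, h𝒜.mk_preimage_eq hp hA] at hlt
  exact hlt.false

lemma IsADFamily.image_preimage (h𝒜 : IsADFamily #ι 𝒜)
    (hp : ConvergesBelow (fun i => #(p ⁻¹' {i})) #α) (hα : ℵ₀ ≤ #α)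
    (hι : #ι = (#α).ord.cof) : IsADFamily #α (Set.preimage p '' 𝒜) := by
  refine ⟨?_, ?_, ?_⟩
  · rw [Set.sUnion_image, ← Set.preimage_sUnion]
    exact (mk_set_le _).antisymm (le_mk_preimage hp h𝒜.1.ge)
  · rintro _ ⟨A, hA, rfl⟩
    exact h𝒜.mk_preimage_eq hp hA
  · rintro _ ⟨A, hA, rfl⟩ _ ⟨B, hB, rfl⟩ hne
    exact h𝒜.mk_preimage_inter_lt hp.lt hα hι hA hB (ne_of_apply_ne _ hne)

lemma IsMadFamily.image_preimage (h𝒜 : IsMadFamily #ι 𝒜)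
    (hp : ConvergesBelow (fun i => #(p ⁻¹' {i})) #α) (hα : (#α).IsSingular)
    (hι : #ι = (#α).ord.cof) : IsMadFamily #α (Set.preimage p '' 𝒜) := by
  obtain ⟨had, hbig⟩ := isMadFamily_iff.1 h𝒜
  refine isMadFamily_iff.2 ⟨had.image_preimage hp hα.aleph0_le hι, fun C hC hCα => ?_⟩
  rw [Set.sUnion_image, ← Set.preimage_sUnion] at hC
  obtain ⟨X, hXC, hX, hcapture⟩ :=
    exists_subset_image_forall_le_mk_inter_preimage hp hα hι hCα
  obtain ⟨A, hA, hXA⟩ := hbig X (hXC.trans (Set.image_subset_iff.2 hC)) hX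
  exact ⟨p ⁻¹' A, Set.mem_image_of_mem _ hA, hcapture A hXA⟩

end Preimage

lemma madSet_cof_subset (hμ : μ.IsSingular) : MADSet μ.ord.cof ⊆ MADSet μ := by
  rintro _ ⟨𝒜, h𝒜, hcof, rfl⟩
  have hα : (#μ.out).IsSingular := by rwa [mk_out]
  have hι : #μ.ord.cof.out = (#μ.out).ord.cof := by simp only [mk_out]
  obtain ⟨p, hp⟩ := exists_convergesBelow_mk_fiber hα hι
  rw [Ordinal.cof_ord_cof] at hcof
  replace h𝒜 : IsMadFamily #μ.ord.cof.out 𝒜 := by rwa [mk_out]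
  have hcard : #(Set.preimage p '' 𝒜) = #𝒜 :=
    mk_image_eq_of_injOn _ _ (h𝒜.1.injOn_preimage hp hα.aleph0_le hι)
  have hmad : IsMadFamily μ (Set.preimage p '' 𝒜) := by
    simpa only [mk_out] using h𝒜.image_preimage hp hα hι
  exact ⟨Set.preimage p '' 𝒜, hmad, hcof.trans_eq hcard.symm, hcard⟩

lemma isADFamily_range_fiber {p : α → ι} (hα : #α ≠ 0) (hp : ∀ i, #(p ⁻¹' {i}) = #α) :
    IsADFamily #α (Set.range fun i => p ⁻¹' {i}) := by
  refine ⟨?_, Set.forall_mem_range.2 hp, ?_⟩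
  · rw [Set.sUnion_range, ← Set.preimage_iUnion, Set.iUnion_of_singleton, Set.preimage_univ,
      mk_univ]
  · rintro _ ⟨i, rfl⟩ _ ⟨j, rfl⟩ hij
    have hdisj : Disjoint (p ⁻¹' {i}) (p ⁻¹' {j}) :=
      (Set.disjoint_singleton.2 (ne_of_apply_ne (p ⁻¹' {·}) hij)).preimage p
    simpa only [hdisj.inter_eq, mk_eq_zero] using pos_iff_ne_zero.2 hα

lemma madSet_nonempty {κ : Cardinal.{u}} (hκ : ℵ₀ ≤ κ) : (MADSet κ).Nonempty := by
  have hκ₀ : κ ≠ 0 := (aleph0_pos.trans_le hκ).ne'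
  have hsum : sum (fun _ : κ.out => κ) = #κ.out := by
    rw [sum_const', mk_out, mul_eq_self hκ]
  obtain ⟨p, hp⟩ := exists_forall_mk_fiber_eq hsum
  have hsurj : Function.Surjective p := fun i => by
    simpa using mk_ne_zero_iff.1 ((hp i).trans_ne hκ₀)
  have had : IsADFamily κ (Set.range fun i => p ⁻¹' {i}) := by
    simpa only [mk_out] using
      isADFamily_range_fiber (p := p) (by rwa [mk_out]) (by simpa only [mk_out] using hp)
  obtain ⟨ℳ, hsub, hℳ⟩ := had.exists_isMadFamily_superset
  refine ⟨#ℳ, ℳ, hℳ, ?_, rfl⟩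
  calc κ.ord.cof ≤ κ := Ordinal.cof_ord_le κ
    _ = #(Set.range fun i => p ⁻¹' {i}) := by
      rw [mk_range_eq (p ⁻¹' {·}) (hsurj.preimage_injective.comp Set.singleton_injective), mk_out]
    _ ≤ #ℳ := mk_le_mk_of_subset hsub

end

/-- For every singular cardinal μ, 𝔞_μ ≤ 𝔞_{cf μ}. -/
theorem stmt19 (μ : Cardinal.{u}) (hμ : ℵ₀ ≤ μ) (hsing : μ.ord.cof < μ) :
    sInf (MADSet μ) ≤ sInf (MADSet μ.ord.cof) := by
  have hκ : ℵ₀ ≤ μ.ord.cof := (isRegular_cof (isSuccLimit_ord hμ)).aleph0_le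
  have hsub : MADSet μ.ord.cof ⊆ MADSet μ := madSet_cof_subset ⟨hμ, hsing.ne⟩
  exact csInf_le_csInf' (madSet_nonempty hκ) hsub
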